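/- Let A = {0,…,k−1} with k ≥ 2 and, for each n ≥ 1, let w_n be the concatenation in lexicographic order of all k^n words of length n over A. Then the infinite sequence x = w₁·w̃₁·w₂·w̃₂·w₃·w̃₃·⋯ is normal: for every nonempty finite word u over A, the number of possibly overlapping occurrences of u in the prefix x[1:n], divided by n, tends to k^{−|u|} as n → ∞. -/

import Mathlib

/-!
Write `K = k ^ |u|` and call `occ(w, u) - |w| / K` the discrepancy `disc u w` of a word `w`.
It is additive under concatenation up to an error `|u|`, since only that many occurrences can
straddle the junction (`abs_disc_append_sub_le`).

The heart of the argument is that every prefix of `w_n` has discrepancy `O(k ^ n)`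
(`abs_disc_take_wn_le`), whereas `w_n` has length `n * k ^ n`. For a fixed position `j`, the word
of index `i` carries `u` at position `j` exactly when `i / q % K = v`, where
`q = k ^ (n - |u| - j)` and `v` is the number with base-`k` expansion `u`. This condition is
periodic in `i`, so among the first `m` words it holds `m / K` times up to an error `q`
(`abs_count_sub_le`); these errors sum over `j` to at most `2 * k ^ n`. The straddling occurrences
cost at most `|u|` per word, hence at most `|u| * k ^ n` in all.

A prefix of the reversal of `w_n` is the reversal of a suffix of `w_n`, so it obeys a bound of the
same order by applying the result to the reverse of `u`. The blocks grow geometrically, so a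
prefix of `x` of length `N` that ends inside block `n + 1` has discrepancy `O(k ^ (n + 1))`, while
`N ≥ n * k ^ n`. Hence the discrepancy divided by `N` is `O(k / n)`, which tends to `0`.
-/

/-- The word of index `i` (for `0 ≤ i < k^n`) in the lexicographic enumeration of
all words of length `n` over `{0, …, k-1}`: the base-`k` expansion of `i`, most
significant digit first, padded with zeros to length `n`. -/
def lexWord (k : ℕ) (hk : 0 < k) (n i : ℕ) : List (Fin k) :=
  List.ofFn fun j : Fin n => (⟨i / k ^ (n - 1 - (j : ℕ)) % k, Nat.mod_lt _ hk⟩ : Fin k)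

/-- `wn k hk n` is the concatenation, in lexicographic order, of all `k^n` words
of length `n` over the alphabet `{0, …, k-1}`. -/
def wn (k : ℕ) (hk : 0 < k) (n : ℕ) : List (Fin k) :=
  ((List.range (k ^ n)).map (lexWord k hk n)).flatten

/-- The prefix `w₁·w̃₁·w₂·w̃₂·⋯·w_n·w̃_n` of the sequence `x`. -/
def xPrefix (k : ℕ) (hk : 0 < k) (n : ℕ) : List (Fin k) :=
  ((List.range n).map fun i => wn k hk (i + 1) ++ (wn k hk (i + 1)).reverse).flatten

/-- The infinite sequence `x = w₁·w̃₁·w₂·w̃₂·w₃·w̃₃·⋯` (0-indexed): its `i`-th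
symbol is the `i`-th symbol of any sufficiently long prefix `w₁·w̃₁·⋯·w_n·w̃_n`. -/
def x (k : ℕ) (hk : 0 < k) (i : ℕ) : Fin k :=
  (xPrefix k hk (i + 1)).getD i ⟨0, hk⟩

/-- The number of (possibly overlapping) occurrences of `u` in `w`. -/
def occurrences {A : Type*} [DecidableEq A] (w u : List A) : ℕ :=
  ((Finset.range (w.length + 1 - u.length)).filter fun i =>
    (w.drop i).take u.length = u).card

/-! ### Occurrences and discrepancy -/

section Occurrences

variable {A : Type*} [DecidableEq A]

lemma occurrences_nil {u : List A} (hu : u ≠ []) : occurrences [] u = 0 := by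
  have : 0 < u.length := List.length_pos_iff.2 hu
  have h : 0 + 1 - u.length = 0 := by omega
  simp [occurrences, h]

lemma occurrences_cons {u : List A} (hu : u ≠ []) (a : A) (w : List A) :
    occurrences (a :: w) u
      = occurrences w u + if (a :: w).take u.length = u then 1 else 0 := by
  have hpos : 0 < u.length := List.length_pos_iff.2 hu
  unfold occurrences
  by_cases hl : u.length ≤ w.length + 1
  · have h : (a :: w).length + 1 - u.length = (w.length + 1 - u.length) + 1 := by
      simp only [List.length_cons]; omega
    rw [h, Finset.card_filter, Finset.card_filter, Finset.sum_range_succ']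
    simp
  · have h1 : (a :: w).length + 1 - u.length = 0 := by
      simp only [List.length_cons]; omega
    have h2 : w.length + 1 - u.length = 0 := by omega
    have h3 : (a :: w).take u.length ≠ u := by
      intro h
      have := congrArg List.length h
      simp only [List.length_take, List.length_cons] at this
      omega
    rw [h1, h2, if_neg h3]
    simp

lemma occurrences_le_length {u : List A} (hu : u ≠ []) (w : List A) :
    occurrences w u ≤ w.length := by
  have hpos : 0 < u.length := List.length_pos_iff.2 hu
  refine (Finset.card_filter_le _ _).trans ?_
  rw [Finset.card_range]
  omega

lemma le_occurrences_append {u : List A} (hu : u ≠ []) (w v : List A) :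
    occurrences w u + occurrences v u ≤ occurrences (w ++ v) u := by
  induction w with
  | nil => simp [occurrences_nil hu]
  | cons a w ih =>
    rw [List.cons_append, occurrences_cons hu, occurrences_cons hu]
    have : (if (a :: w).take u.length = u then 1 else 0)
        ≤ if (a :: (w ++ v)).take u.length = u then 1 else 0 := by
      split_ifs with h1 h2
      · exact le_rfl
      · exfalso
        apply h2
        have hl : u.length ≤ (a :: w).length := by
          have := congrArg List.length h1
          rw [List.length_take] at this
          omega
        rw [← List.cons_append, List.take_append_of_le_length hl, h1]
      · exact Nat.zero_le _
      · exact le_rfl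
    omega

/-- The bound `min |w| |u|` on the number of straddling occurrences, rather than `|u|`, is what
makes the induction on `w` go through. -/
lemma occurrences_append_le {u : List A} (hu : u ≠ []) (w v : List A) :
    occurrences (w ++ v) u ≤ occurrences w u + occurrences v u + min w.length u.length := by
  induction w with
  | nil => simp
  | cons a w ih =>
    rw [List.cons_append, occurrences_cons hu, occurrences_cons hu]
    by_cases hl : u.length ≤ (a :: w).length
    · rw [← List.cons_append, List.take_append_of_le_length hl]
      simp only [List.length_cons] at hl ⊢
      omega
    · simp only [List.length_cons] at hl ⊢
      have : (if (a :: (w ++ v)).take u.length = u then 1 else 0) ≤ 1 := by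
        split_ifs <;> simp
      omega

lemma occurrences_le_reverse (w u : List A) :
    occurrences w u ≤ occurrences w.reverse u.reverse := by
  unfold occurrences
  refine Finset.card_le_card_of_injOn (fun i => w.length - u.length - i) ?_ ?_
  · intro i hi
    simp only [Finset.coe_filter, Finset.mem_range, Set.mem_ofPred_eq, List.length_reverse] at hi ⊢
    obtain ⟨hi, h⟩ := hi
    refine ⟨by omega, ?_⟩
    rw [List.drop_reverse, List.take_reverse, List.drop_take]
    conv_rhs => rw [← h]
    congr 1
    simp only [List.length_take]
    congr 1
    · omega
    · congr 1
      omega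
  · intro i hi j hj hij
    simp only [Finset.coe_filter, Finset.mem_range, Set.mem_ofPred_eq] at hi hj hij
    omega

lemma occurrences_reverse (w u : List A) :
    occurrences w.reverse u = occurrences w u.reverse := by
  apply le_antisymm
  · simpa using occurrences_le_reverse w.reverse u
  · simpa using occurrences_le_reverse w u.reverse

end Occurrences

/-- The discrepancy of `w` with respect to `u`: the number of occurrences of `u` in `w` minus the
expected number `|w| / k ^ |u|`. -/
noncomputable def disc {k : ℕ} (u w : List (Fin k)) : ℝ :=
  (occurrences w u : ℝ) - (w.length : ℝ) / (k : ℝ) ^ u.length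

section Disc

variable {k : ℕ} {u : List (Fin k)}

lemma disc_nil (hu : u ≠ []) : disc u [] = 0 := by
  simp [disc, occurrences_nil hu]

lemma abs_disc_append_sub_le (hu : u ≠ []) (w v : List (Fin k)) :
    |disc u (w ++ v) - disc u w - disc u v| ≤ u.length := by
  have h1 : ((occurrences w u + occurrences v u : ℕ) : ℝ) ≤ (occurrences (w ++ v) u : ℕ) :=
    Nat.cast_le.2 (le_occurrences_append hu w v)
  have h2 : ((occurrences (w ++ v) u : ℕ) : ℝ)
      ≤ (occurrences w u + occurrences v u + u.length : ℕ) :=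
    Nat.cast_le.2 ((occurrences_append_le hu w v).trans (by omega))
  push_cast at h1 h2
  unfold disc
  rw [List.length_append, Nat.cast_add, add_div, abs_le]
  constructor <;> linarith

lemma abs_disc_append_le (hu : u ≠ []) (w v : List (Fin k)) :
    |disc u (w ++ v)| ≤ |disc u w| + |disc u v| + u.length := by
  have h := abs_disc_append_sub_le hu w v
  rw [abs_le] at h
  rw [abs_le]
  constructor <;>
    linarith [le_abs_self (disc u w), neg_abs_le (disc u w), le_abs_self (disc u v),
      neg_abs_le (disc u v)]

lemma abs_disc_le_length (hk : 0 < k) (hu : u ≠ []) (w : List (Fin k)) :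
    |disc u w| ≤ w.length := by
  have h1 : ((occurrences w u : ℕ) : ℝ) ≤ w.length := Nat.cast_le.2 (occurrences_le_length hu w)
  have hk1 : (1 : ℝ) ≤ (k : ℝ) ^ u.length := one_le_pow₀ (by exact_mod_cast hk)
  have h2 : (w.length : ℝ) / (k : ℝ) ^ u.length ≤ w.length :=
    div_le_self (Nat.cast_nonneg _) hk1
  have h3 : (0 : ℝ) ≤ (w.length : ℝ) / (k : ℝ) ^ u.length := by positivity
  have h4 : (0 : ℝ) ≤ (occurrences w u : ℝ) := Nat.cast_nonneg _
  unfold disc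
  rw [abs_le]
  constructor <;> linarith

lemma disc_reverse (w : List (Fin k)) : disc u w.reverse = disc u.reverse w := by
  simp [disc, occurrences_reverse]

end Disc

/-! ### Counting a periodic condition on indices -/

/-- The numbers `i` with `i / q % K = v` form one run of length `q` in each period of length
`q * K`, so an initial segment of length `m` contains `m / K` of them up to an error `q`. -/
lemma abs_count_sub_le {q K v : ℕ} (hq : 0 < q) (hv : v < K) (m : ℕ) :
    |((Nat.count (fun i => i / q % K = v) m : ℕ) : ℝ) - (m : ℝ) / K| ≤ q := by
  have hK : 0 < K := by omega
  have hKR : (0 : ℝ) < K := by exact_mod_cast hK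
  have hfull : Nat.count (fun i => i / q % K = v) (q * K) = q := by
    rw [Nat.count_eq_card_filter_range]
    have : (Finset.range (q * K)).filter (fun i => i / q % K = v)
        = Finset.Ico (v * q) ((v + 1) * q) := by
      ext i
      simp only [Finset.mem_filter, Finset.mem_range, Finset.mem_Ico]
      constructor
      · rintro ⟨hi, h⟩
        rw [Nat.mod_eq_of_lt (Nat.div_lt_of_lt_mul hi)] at h
        rw [← Nat.le_div_iff_mul_le hq, ← Nat.div_lt_iff_lt_mul hq]
        omega
      · rintro ⟨h1, h2⟩
        rw [← Nat.le_div_iff_mul_le hq] at h1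
        rw [← Nat.div_lt_iff_lt_mul hq] at h2
        have h3 : i / q = v := by omega
        refine ⟨?_, by rw [h3, Nat.mod_eq_of_lt hv]⟩
        rw [mul_comm, ← Nat.div_lt_iff_lt_mul hq]
        omega
    rw [this, Nat.card_Ico, add_mul]
    omega
  induction m using Nat.strong_induction_on with
  | _ m ih =>
    by_cases hm : m < q * K
    · have h1 : Nat.count (fun i => i / q % K = v) m ≤ q := by
        conv_rhs => rw [← hfull]
        exact Nat.count_monotone _ hm.le
      have h1R : ((Nat.count (fun i => i / q % K = v) m : ℕ) : ℝ) ≤ q := Nat.cast_le.2 h1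
      have h2 : (m : ℝ) / K ≤ q := by
        rw [div_le_iff₀ hKR]
        exact_mod_cast hm.le
      have h3 : (0 : ℝ) ≤ (m : ℝ) / K := by positivity
      have h4 : (0 : ℝ) ≤ ((Nat.count (fun i => i / q % K = v) m : ℕ) : ℝ) := Nat.cast_nonneg _
      rw [abs_le]
      constructor <;> linarith
    · obtain ⟨m', rfl⟩ := Nat.exists_eq_add_of_le (not_lt.1 hm)
      have hqK : 0 < q * K := Nat.mul_pos hq hK
      have hper : ∀ i, ((q * K + i) / q % K = v) = (i / q % K = v) := by
        intro i
        rw [Nat.mul_add_div hq, Nat.add_mod_left]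
      have hs := ih m' (by omega)
      rw [Nat.count_add, hfull]
      simp only [hper]
      have : ((q * K + m' : ℕ) : ℝ) / K = q + (m' : ℝ) / K := by
        push_cast
        field_simp
      rw [this, Nat.cast_add]
      convert hs using 2
      ring

/-! ### Subwords of the words of length `n` -/

section Lex

variable {k : ℕ} (hk : 0 < k)

lemma length_lexWord (n i : ℕ) : (lexWord k hk n i).length = n := by
  simp [lexWord]

lemma lexWord_succ (l a : ℕ) :
    lexWord k hk (l + 1) a = ⟨a / k ^ l % k, Nat.mod_lt _ hk⟩ :: lexWord k hk l a := by
  unfold lexWord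
  rw [List.ofFn_succ]
  congr 1
  congr 1
  funext j
  have : l + 1 - 1 - (j.succ : ℕ) = l - 1 - (j : ℕ) := by
    simp only [Fin.val_succ]
    omega
  simp only [this]

lemma take_drop_lexWord {n l j : ℕ} (h : j + l ≤ n) (i : ℕ) :
    ((lexWord k hk n i).drop j).take l = lexWord k hk l (i / k ^ (n - l - j)) := by
  apply List.ext_getElem
  · simp [length_lexWord]
    omega
  · intro t h1 h2
    rw [length_lexWord] at h2
    simp only [lexWord, List.getElem_take, List.getElem_drop, List.getElem_ofFn, Fin.mk.injEq]
    rw [Nat.div_div_eq_div_mul, ← pow_add]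
    congr 3
    omega

/-- Here `v` is the number whose base-`k` expansion is `u`. -/
lemma exists_lexWord_eq_iff (u : List (Fin k)) :
    ∃ v < k ^ u.length, ∀ a, lexWord k hk u.length a = u ↔ a % k ^ u.length = v := by
  induction u with
  | nil => exact ⟨0, by simp, fun a => by simp [lexWord, Nat.mod_one]⟩
  | cons c u ih =>
    obtain ⟨v, hv, h⟩ := ih
    refine ⟨v + k ^ u.length * c, ?_, fun a => ?_⟩
    · have hc : (c : ℕ) + 1 ≤ k := c.2
      calc v + k ^ u.length * c < k ^ u.length + k ^ u.length * c := by omega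
        _ = k ^ u.length * (c + 1) := by ring
        _ ≤ k ^ u.length * k := Nat.mul_le_mul_left _ hc
        _ = k ^ (c :: u).length := by rw [List.length_cons, pow_succ]
    · rw [List.length_cons, lexWord_succ, List.cons.injEq, h, Nat.mod_pow_succ, Fin.ext_iff]
      constructor
      · rintro ⟨h1, h2⟩
        simp only at h1
        rw [h1, h2]
      · intro h1
        have hlt : a % k ^ u.length < k ^ u.length := Nat.mod_lt _ (by positivity)
        have e1 := congrArg (· % k ^ u.length) h1
        have e2 := congrArg (· / k ^ u.length) h1
        have hp : 0 < k ^ u.length := by positivity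
        simp only [Nat.add_mul_mod_self_left, Nat.mod_mod, Nat.mod_eq_of_lt hv] at e1
        simp only [Nat.add_mul_div_left _ _ hp, Nat.div_eq_of_lt hlt, Nat.div_eq_of_lt hv,
          zero_add] at e2
        exact ⟨e2, e1⟩

lemma sum_occurrences_lexWord (u : List (Fin k)) :
    ∃ v < k ^ u.length, ∀ n m, ∑ i ∈ Finset.range m, occurrences (lexWord k hk n i) u
      = ∑ j ∈ Finset.range (n + 1 - u.length),
          Nat.count (fun i => i / k ^ (n - u.length - j) % k ^ u.length = v) m := by
  obtain ⟨v, hv, h⟩ := exists_lexWord_eq_iff hk u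
  refine ⟨v, hv, fun n m => ?_⟩
  simp only [occurrences, length_lexWord, Finset.card_filter, Nat.count_eq_card_filter_range]
  rw [Finset.sum_comm]
  refine Finset.sum_congr rfl fun j hj => Finset.sum_congr rfl fun i _ => ?_
  rw [Finset.mem_range] at hj
  rw [take_drop_lexWord hk (by omega)]
  simp only [h]

/-! ### Prefixes of `w_n` -/

lemma sum_pow_sub_le (hk2 : 2 ≤ k) (r : ℕ) :
    ∑ j ∈ Finset.range (r + 1), k ^ (r - j) ≤ 2 * k ^ r := by
  have hrefl := Finset.sum_range_reflect (fun j => k ^ j) (r + 1)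
  simp only [Nat.add_sub_cancel] at hrefl
  rw [hrefl]
  rw [Finset.sum_range_succ]
  have := Nat.geomSum_lt hk2 (s := Finset.range r) (n := r) (by simp)
  omega

lemma abs_sum_disc_lexWord_le (hk2 : 2 ≤ k) {u : List (Fin k)} (hu : u ≠ [])
    (n m : ℕ) :
    |∑ i ∈ Finset.range m, disc u (lexWord k hk n i)| ≤ 2 * (k : ℝ) ^ n + m * u.length := by
  obtain ⟨v, hv, h⟩ := sum_occurrences_lexWord hk u
  have hK1 : (1 : ℝ) ≤ (k : ℝ) ^ u.length := one_le_pow₀ (by exact_mod_cast hk)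
  set r := n + 1 - u.length with hr
  have hsum : ∑ i ∈ Finset.range m, disc u (lexWord k hk n i)
      = ∑ j ∈ Finset.range r,
          (((Nat.count (fun i => i / k ^ (n - u.length - j) % k ^ u.length = v) m : ℕ) : ℝ)
            - (m : ℝ) / (k ^ u.length : ℕ))
        - (m * ((n : ℝ) - r)) / (k : ℝ) ^ u.length := by
    simp only [disc, length_lexWord, Finset.sum_sub_distrib]
    rw [← Nat.cast_sum, h n m, Nat.cast_sum]
    simp only [Finset.sum_const, Finset.card_range, nsmul_eq_mul, Nat.cast_pow]
    ring
  have hgeom : ∑ j ∈ Finset.range r, ((k ^ (n - u.length - j) : ℕ) : ℝ) ≤ 2 * (k : ℝ) ^ n := by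
    rw [← Nat.cast_sum]
    by_cases hl : u.length ≤ n
    · have hr' : r = (n - u.length) + 1 := by omega
      rw [hr']
      have h1 := sum_pow_sub_le hk2 (n - u.length)
      have h2 : k ^ (n - u.length) ≤ k ^ n := Nat.pow_le_pow_right hk (by omega)
      exact_mod_cast h1.trans (Nat.mul_le_mul_left 2 h2)
    · have hr' : r = 0 := by omega
      rw [hr']
      simp
  have hmain : |∑ j ∈ Finset.range r,
          (((Nat.count (fun i => i / k ^ (n - u.length - j) % k ^ u.length = v) m : ℕ) : ℝ)
            - (m : ℝ) / (k ^ u.length : ℕ))| ≤ 2 * (k : ℝ) ^ n := by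
    refine (Finset.abs_sum_le_sum_abs _ _).trans (le_trans ?_ hgeom)
    exact Finset.sum_le_sum fun j _ => abs_count_sub_le (by positivity) hv m
  -- `n - r` is `|u| - 1` if `|u| ≤ n`, and `n` otherwise.
  have hrest : |(m * ((n : ℝ) - r)) / (k : ℝ) ^ u.length| ≤ m * u.length := by
    have hpos : 0 < u.length := List.length_pos_iff.2 hu
    have h1 : (n : ℝ) ≤ r + u.length := by
      have : n ≤ r + u.length := by omega
      exact_mod_cast this
    have h2 : (r : ℝ) ≤ n := by
      have : r ≤ n := by omega
      exact_mod_cast this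
    have h3 : (0 : ℝ) ≤ m * ((n : ℝ) - r) := mul_nonneg (Nat.cast_nonneg _) (by linarith)
    rw [abs_of_nonneg (by positivity)]
    refine (div_le_self h3 hK1).trans ?_
    exact mul_le_mul_of_nonneg_left (by linarith) (Nat.cast_nonneg _)
  rw [hsum]
  exact (abs_sub _ _).trans (add_le_add hmain hrest)

/-- The concatenation of the first `m` words of length `n` in lexicographic order. -/
def lexConcat (n m : ℕ) : List (Fin k) :=
  ((List.range m).map (lexWord k hk n)).flatten

lemma lexConcat_succ (n m : ℕ) :
    lexConcat hk n (m + 1) = lexConcat hk n m ++ lexWord k hk n m := by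
  simp [lexConcat, List.range_succ]

lemma length_lexConcat (n m : ℕ) : (lexConcat hk n m).length = m * n := by
  induction m with
  | zero => simp [lexConcat]
  | succ m ih => rw [lexConcat_succ, List.length_append, ih, length_lexWord]; ring

lemma length_wn (n : ℕ) : (wn k hk n).length = k ^ n * n :=
  length_lexConcat hk n (k ^ n)

lemma abs_disc_lexConcat_sub_le {u : List (Fin k)} (hu : u ≠ []) (n m : ℕ) :
    |disc u (lexConcat hk n m) - ∑ i ∈ Finset.range m, disc u (lexWord k hk n i)|
      ≤ m * u.length := by
  induction m with
  | zero => simp [lexConcat, disc_nil hu]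
  | succ m ih =>
    have h := abs_disc_append_sub_le hu (lexConcat hk n m) (lexWord k hk n m)
    rw [lexConcat_succ, Finset.sum_range_succ]
    rw [abs_le] at h ih ⊢
    push_cast
    constructor <;> linarith

lemma exists_take_lexConcat (n M L : ℕ) :
    ∃ m ≤ M, ∃ t : List (Fin k), t.length ≤ n ∧
      (lexConcat hk n M).take L = lexConcat hk n m ++ t := by
  induction M with
  | zero => exact ⟨0, le_rfl, [], by simp, by simp [lexConcat]⟩
  | succ M ih =>
    rw [lexConcat_succ]
    by_cases hL : L ≤ (lexConcat hk n M).length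
    · obtain ⟨m, hm, t, ht, h⟩ := ih
      exact ⟨m, by omega, t, ht, by rw [List.take_append_of_le_length hL, h]⟩
    · refine ⟨M, by omega, (lexWord k hk n M).take (L - (lexConcat hk n M).length), ?_, ?_⟩
      · rw [List.length_take, length_lexWord]
        omega
      · rw [List.take_append, List.take_of_length_le (by omega)]

/-- The constant in the bounds on discrepancies, depending only on the length `l` of the word being
counted. -/
def discConst (l : ℕ) : ℝ := 3 * l + 3

lemma length_le_discConst (l : ℕ) : (l : ℝ) ≤ discConst l := by
  have : (0 : ℝ) ≤ l := Nat.cast_nonneg _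
  unfold discConst
  linarith

lemma discConst_nonneg (l : ℕ) : 0 ≤ discConst l :=
  (Nat.cast_nonneg l).trans (length_le_discConst l)

lemma length_le_discConst_mul_pow {k : ℕ} (hk : 0 < k) (l n : ℕ) : (l : ℝ) ≤ discConst l * (k : ℝ) ^ n :=
  (length_le_discConst l).trans
    (le_mul_of_one_le_right (discConst_nonneg l) (one_le_pow₀ (by exact_mod_cast hk)))

/-- All prefixes of `w_n` have discrepancy `O(k ^ n)`, smaller than `|w_n|` by a factor of order
`n`. -/
lemma abs_disc_take_wn_le (hk2 : 2 ≤ k) {u : List (Fin k)} (hu : u ≠ []) (n L : ℕ) :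
    |disc u ((wn k hk n).take L)| ≤ discConst u.length * (k : ℝ) ^ n := by
  obtain ⟨m, hm, t, ht, h⟩ := exists_take_lexConcat hk n (k ^ n) L
  have hw : (wn k hk n).take L = lexConcat hk n m ++ t := h
  rw [hw]
  have h1 := abs_disc_append_le hu (lexConcat hk n m) t
  have h2 := abs_disc_le_length hk hu t
  have h3 := abs_disc_lexConcat_sub_le hk hu n m
  have h4 := abs_sum_disc_lexWord_le hk hk2 hu n m
  have h5 : |disc u (lexConcat hk n m)| ≤ 2 * (k : ℝ) ^ n + m * u.length + m * u.length := by
    rw [abs_le] at h3 h4 ⊢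
    constructor <;> linarith
  have hmR : (m : ℝ) ≤ (k : ℝ) ^ n := by exact_mod_cast hm
  have hl : (0 : ℝ) ≤ u.length := Nat.cast_nonneg _
  have h6 : (m : ℝ) * u.length ≤ (k : ℝ) ^ n * u.length := mul_le_mul_of_nonneg_right hmR hl
  have h7 : (t.length : ℝ) ≤ (k : ℝ) ^ n := by
    exact_mod_cast ht.trans (Nat.lt_pow_self (by omega)).le
  have h8 : (u.length : ℝ) ≤ (k : ℝ) ^ n * u.length :=
    le_mul_of_one_le_left hl (one_le_pow₀ (by exact_mod_cast hk))
  have h9 : discConst u.length * (k : ℝ) ^ n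
      = 3 * ((k : ℝ) ^ n * u.length) + 3 * (k : ℝ) ^ n := by
    unfold discConst
    ring
  linarith

/-! ### Prefixes of `x` -/

lemma abs_disc_take_reverse_wn_le (hk2 : 2 ≤ k) {u : List (Fin k)} (hu : u ≠ []) (n L : ℕ) :
    |disc u ((wn k hk n).reverse.take L)| ≤ 3 * (discConst u.length * (k : ℝ) ^ n) := by
  have hu' : u.reverse ≠ [] := by simpa using hu
  rw [List.take_reverse, disc_reverse]
  set p := (wn k hk n).length - L
  have h1 := abs_disc_take_wn_le hk hk2 hu' n p
  have h2 := abs_disc_take_wn_le hk hk2 hu' n (wn k hk n).length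
  have h3 := abs_disc_append_sub_le hu' ((wn k hk n).take p) ((wn k hk n).drop p)
  rw [List.take_length] at h2
  rw [List.take_append_drop] at h3
  rw [List.length_reverse] at h1 h2 h3
  have h4 := length_le_discConst_mul_pow hk u.length n
  rw [abs_le] at h1 h2 h3 ⊢
  constructor <;> linarith

lemma abs_disc_take_block_le (hk2 : 2 ≤ k) {u : List (Fin k)} (hu : u ≠ []) (n L : ℕ) :
    |disc u ((wn k hk n ++ (wn k hk n).reverse).take L)|
      ≤ 5 * (discConst u.length * (k : ℝ) ^ n) := by
  rw [List.take_append]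
  have h1 := abs_disc_take_wn_le hk hk2 hu n L
  have h2 := abs_disc_take_reverse_wn_le hk hk2 hu n (L - (wn k hk n).length)
  have h3 := abs_disc_append_le hu ((wn k hk n).take L)
    ((wn k hk n).reverse.take (L - (wn k hk n).length))
  have h4 := length_le_discConst_mul_pow hk u.length n
  linarith

lemma xPrefix_succ (n : ℕ) :
    xPrefix k hk (n + 1)
      = xPrefix k hk n ++ (wn k hk (n + 1) ++ (wn k hk (n + 1)).reverse) := by
  simp [xPrefix, List.range_succ]

/-- In units of `discConst |u| * k ^ (n + 1)`, the previous blocks contribute at most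
`12 / k ≤ 6`, the last one `5` and the junction `1`; the constant `12` is chosen so that the bound
reproduces itself from `n` to `n + 1`. -/
lemma abs_disc_xPrefix_append_le (hk2 : 2 ≤ k) {u : List (Fin k)} (hu : u ≠ []) (n L : ℕ)
    (h : |disc u (xPrefix k hk n)| ≤ 12 * (discConst u.length * (k : ℝ) ^ n)) :
    |disc u (xPrefix k hk n ++ (wn k hk (n + 1) ++ (wn k hk (n + 1)).reverse).take L)|
      ≤ 12 * (discConst u.length * (k : ℝ) ^ (n + 1)) := by
  have h1 := abs_disc_take_block_le hk hk2 hu (n + 1) L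
  have h2 := abs_disc_append_le hu (xPrefix k hk n)
    ((wn k hk (n + 1) ++ (wn k hk (n + 1)).reverse).take L)
  have h3 := length_le_discConst_mul_pow hk u.length (n + 1)
  have hk2R : (2 : ℝ) ≤ k := by exact_mod_cast hk2
  have h4 : 2 * (discConst u.length * (k : ℝ) ^ n) ≤ discConst u.length * (k : ℝ) ^ (n + 1) := by
    have h5 : 0 ≤ discConst u.length * (k : ℝ) ^ n :=
      mul_nonneg (discConst_nonneg _) (by positivity)
    calc 2 * (discConst u.length * (k : ℝ) ^ n) ≤ k * (discConst u.length * (k : ℝ) ^ n) :=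
          mul_le_mul_of_nonneg_right hk2R h5
      _ = discConst u.length * (k : ℝ) ^ (n + 1) := by ring
  linarith

lemma abs_disc_xPrefix_le (hk2 : 2 ≤ k) {u : List (Fin k)} (hu : u ≠ []) (n : ℕ) :
    |disc u (xPrefix k hk n)| ≤ 12 * (discConst u.length * (k : ℝ) ^ n) := by
  induction n with
  | zero =>
    have : xPrefix k hk 0 = [] := by simp [xPrefix]
    rw [this, disc_nil hu]
    simpa using discConst_nonneg u.length
  | succ n ih =>
    have h := abs_disc_xPrefix_append_le hk hk2 hu n
      (wn k hk (n + 1) ++ (wn k hk (n + 1)).reverse).length ih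
    rwa [List.take_length, ← xPrefix_succ] at h

lemma length_xPrefix_succ (n : ℕ) :
    (xPrefix k hk (n + 1)).length
      = (xPrefix k hk n).length + 2 * (k ^ (n + 1) * (n + 1)) := by
  rw [xPrefix_succ, List.length_append, List.length_append, List.length_reverse, length_wn]
  ring

lemma xPrefix_isPrefix {n m : ℕ} (h : n ≤ m) : xPrefix k hk n <+: xPrefix k hk m := by
  induction m, h using Nat.le_induction with
  | base => exact List.prefix_rfl
  | succ m _ ih =>
    rw [xPrefix_succ]
    exact ih.trans (List.prefix_append _ _)

lemma mul_pow_le_length_xPrefix (n : ℕ) : n * k ^ n ≤ (xPrefix k hk n).length := by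
  cases n with
  | zero => simp
  | succ n =>
    rw [length_xPrefix_succ, mul_comm]
    omega

lemma le_length_xPrefix (n : ℕ) : n ≤ (xPrefix k hk n).length :=
  (Nat.le_mul_of_pos_right n (by positivity)).trans (mul_pow_le_length_xPrefix hk n)

lemma x_eq_getElem {n i : ℕ} (h : i < (xPrefix k hk n).length) :
    x k hk i = (xPrefix k hk n)[i] := by
  have hi : i < (xPrefix k hk (i + 1)).length := le_length_xPrefix hk (i + 1)
  have hx : x k hk i = (xPrefix k hk (i + 1))[i] := by
    unfold x
    rw [List.getD_eq_getElem _ _ hi]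
  rw [hx]
  rcases le_total (i + 1) n with hn | hn
  · exact (xPrefix_isPrefix hk hn).getElem hi
  · exact ((xPrefix_isPrefix hk hn).getElem h).symm

lemma map_x_range {n N : ℕ} (h : N ≤ (xPrefix k hk n).length) :
    (List.range N).map (x k hk) = (xPrefix k hk n).take N := by
  apply List.ext_getElem
  · simpa using h
  · intro i h1 h2
    rw [List.getElem_map, List.getElem_range, List.getElem_take]
    exact x_eq_getElem hk _

lemma abs_disc_map_x_le (hk2 : 2 ≤ k) {u : List (Fin k)} (hu : u ≠ []) {n N : ℕ}
    (h1 : (xPrefix k hk n).length ≤ N) (h2 : N ≤ (xPrefix k hk (n + 1)).length) :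
    |disc u ((List.range N).map (x k hk))|
      ≤ 12 * (discConst u.length * (k : ℝ) ^ (n + 1)) := by
  rw [map_x_range hk h2, xPrefix_succ, List.take_append, List.take_of_length_le h1]
  exact abs_disc_xPrefix_append_le hk hk2 hu n _ (abs_disc_xPrefix_le hk hk2 hu n)

lemma exists_block {n₀ N : ℕ} (h0 : 0 < n₀) (hN : (xPrefix k hk n₀).length ≤ N) :
    ∃ n ≥ n₀, (xPrefix k hk n).length ≤ N ∧ N ≤ (xPrefix k hk (n + 1)).length := by
  have hex : ∃ n, N < (xPrefix k hk (n + 1)).length :=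
    ⟨N, le_length_xPrefix hk (N + 1)⟩
  have hspec := Nat.find_spec hex
  have hge : n₀ ≤ Nat.find hex := by
    by_contra hlt
    have := (xPrefix_isPrefix hk (Nat.succ_le_of_lt (not_le.1 hlt))).length_le
    simp only [Nat.succ_eq_add_one] at this
    omega
  refine ⟨Nat.find hex, hge, ?_, hspec.le⟩
  have hmin := Nat.find_min hex (m := Nat.find hex - 1) (by omega)
  rw [Nat.sub_add_cancel (by omega)] at hmin
  omega

end Lex

/-- The sequence `x = w₁·w̃₁·w₂·w̃₂·w₃·w̃₃·⋯` is normal: for every nonempty word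
`u`, the frequency of occurrences of `u` in the length-`n` prefix of `x` tends
to `k^(-|u|)`. -/
theorem x_is_normal (k : ℕ) (hk : 2 ≤ k) (u : List (Fin k)) (hu : u ≠ []) :
    Filter.Tendsto
      (fun n : ℕ =>
        (occurrences ((List.range n).map (x k (by omega))) u : ℝ) / n)
      Filter.atTop (nhds (1 / (k : ℝ) ^ u.length)) := by
  have hk0 : 0 < k := by omega
  have hkR : (0 : ℝ) < k := by exact_mod_cast hk0
  rw [Metric.tendsto_atTop]
  intro ε hε
  obtain ⟨n₀, hn₀⟩ := exists_nat_gt (12 * discConst u.length * k / ε)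
  have hC := discConst_nonneg u.length
  have hn₀pos : (0 : ℝ) < n₀ := lt_of_le_of_lt (by positivity) hn₀
  have hn₀pos' : 0 < n₀ := by exact_mod_cast hn₀pos
  refine ⟨(xPrefix k hk0 n₀).length, fun N hN => ?_⟩
  obtain ⟨n, hn, h1, h2⟩ := exists_block hk0 hn₀pos' hN
  have hdisc := abs_disc_map_x_le hk0 hk hu h1 h2
  have hNn : (n : ℝ) * (k : ℝ) ^ n ≤ N := by
    exact_mod_cast (mul_pow_le_length_xPrefix hk0 n).trans h1
  have hnR : (n₀ : ℝ) ≤ n := by exact_mod_cast hn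
  have hpow : (0 : ℝ) < (k : ℝ) ^ n := by positivity
  have hNpos : (0 : ℝ) < N := lt_of_lt_of_le (mul_pos (by linarith) hpow) hNn
  have heq : (occurrences ((List.range N).map (x k hk0)) u : ℝ) / N - 1 / (k : ℝ) ^ u.length
      = disc u ((List.range N).map (x k hk0)) / N := by
    simp only [disc, List.length_map, List.length_range]
    field_simp
  rw [Real.dist_eq, heq, abs_div, abs_of_pos hNpos, div_lt_iff₀ hNpos]
  rw [div_lt_iff₀ hε] at hn₀
  calc |disc u ((List.range N).map (x k hk0))|
      ≤ 12 * (discConst u.length * (k : ℝ) ^ (n + 1)) := hdisc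
    _ = (12 * discConst u.length * k) * (k : ℝ) ^ n := by ring
    _ < (n₀ * ε) * (k : ℝ) ^ n := mul_lt_mul_of_pos_right hn₀ hpow
    _ ≤ (n * ε) * (k : ℝ) ^ n := by gcongr
    _ = ε * (n * (k : ℝ) ^ n) := by ring
    _ ≤ ε * N := mul_le_mul_of_nonneg_left hNn hε.le
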